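/- Let F be a 2t-repeated k-non-signaling function from ({0,1}^n)^{2t} to ({0,1})^{2t} with k ≥ 7 that is permutation folded and passes both the linearity test and the consistency test with probability at least 1-ε. Then the self-correction F̂ is (1-8ε)-consistent: for any two queries X, Y ∈ ({0,1}^n)^t, Pr[F̂(X)_j = F̂(Y)_j for all j ∈ [t] with X_j = Y_j] ≥ 1-8ε. -/

import Mathlib

noncomputable def prob {α : Type*} (p : PMF α) (E : Set α) : ℝ :=
  (p.toOuterMeasure E).toReal

def restrictAssign {D A : Type*} {S T : Finset D} (h : T ⊆ S)
    (f : {x // x ∈ S} → A) : {x // x ∈ T} → A :=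
  fun x => f ⟨x.1, h x.2⟩

noncomputable def marginal {D A : Type*} {S : Finset D} (p : PMF ({x // x ∈ S} → A))
    {T : Finset D} (h : T ⊆ S) : PMF ({x // x ∈ T} → A) :=
  p.map (restrictAssign h)

def IsNonSignaling {D A : Type*} [DecidableEq D] (k : ℕ)
    (F : (S : Finset D) → PMF ({x // x ∈ S} → A)) : Prop :=
  ∀ S T : Finset D, S.card ≤ k → T.card ≤ k →
    marginal (F S) (Finset.inter_subset_left : S ∩ T ⊆ S) =
    marginal (F T) (Finset.inter_subset_right : S ∩ T ⊆ T)

def permQ {t : ℕ} {β : Type*} (π : Equiv.Perm (Fin t)) (Q : Fin t → β) : Fin t → β :=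
  fun j => Q (π j)

def IsPermFolded {t : ℕ} {D A : Type*} [DecidableEq D] (k : ℕ)
    (F : (S : Finset (Fin t → D)) → PMF ({Q // Q ∈ S} → (Fin t → A))) : Prop :=
  ∀ (ℓ : ℕ) (Q : Fin ℓ → (Fin t → D)) (π : Fin ℓ → Equiv.Perm (Fin t))
    (b : Fin ℓ → (Fin t → A)), ℓ ≤ k →
    prob (F (Finset.image Q Finset.univ))
      {f | ∀ i : Fin ℓ, f ⟨Q i, Finset.mem_image_of_mem _ (Finset.mem_univ i)⟩ = b i} =
    prob (F (Finset.image (fun i => permQ (π i) (Q i)) Finset.univ))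
      {f | ∀ i : Fin ℓ, f ⟨permQ (π i) (Q i),
          Finset.mem_image_of_mem _ (Finset.mem_univ i)⟩ = permQ (π i) (b i)}

/-- A `2t`-repeated non-signaling function over `{0,1}^n`. -/
abbrev NSFam (n t : ℕ) :=
  (S : Finset (Fin t → Fin n → ZMod 2)) → PMF ({Q // Q ∈ S} → (Fin t → ZMod 2))

/-- Acceptance probability of the linearity test: sample uniform `X, Y`, query `F` on
`{X, Y, X+Y}` and check `F(X) + F(Y) = F(X+Y)` in all coordinates. -/
noncomputable def linTestAccept {n t : ℕ} (F : NSFam n t) : ℝ :=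
  prob ((PMF.uniformOfFintype ((Fin t → Fin n → ZMod 2) × (Fin t → Fin n → ZMod 2))).bind
    fun p => (F {p.1, p.2, p.1 + p.2}).map fun f =>
      (f ⟨p.1, by simp⟩, f ⟨p.2, by simp⟩, f ⟨p.1 + p.2, by simp⟩))
    {y | y.1 + y.2.1 = y.2.2}

/-- Acceptance probability of the consistency test on a `2t`-repeated function: sample
uniform `W, Z₁, Z₂`, query `F` on `{[W;Z₁], [W;Z₂]}` and check that the answers agree
on the first `t` coordinates. -/
noncomputable def consTestAccept {n t : ℕ} (F : NSFam n (t + t)) : ℝ :=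
  prob ((PMF.uniformOfFintype ((Fin t → Fin n → ZMod 2) × (Fin t → Fin n → ZMod 2) ×
      (Fin t → Fin n → ZMod 2))).bind
    fun w => (F {Fin.append w.1 w.2.1, Fin.append w.1 w.2.2}).map fun f =>
      (f ⟨Fin.append w.1 w.2.1, by simp⟩, f ⟨Fin.append w.1 w.2.2, by simp⟩))
    {y : (Fin (t + t) → ZMod 2) × (Fin (t + t) → ZMod 2) |
      ∀ j : Fin t, y.1 (Fin.castAdd t j) = y.2 (Fin.castAdd t j)}

/-- The self-correction of a `2t`-repeated non-signaling function: a query `Q` is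
answered by sampling fresh independent uniform `R, W`, querying `F` on
`{[R;W], [Q+R;W]}`, and returning the first `t` coordinates of
`F([R;W]) + F([Q+R;W])`. -/
noncomputable def selfCorrect {n t : ℕ} (F : NSFam n (t + t)) : NSFam n t :=
  fun S =>
    (PMF.uniformOfFintype (({Q // Q ∈ S} → (Fin t → Fin n → ZMod 2)) ×
        ({Q // Q ∈ S} → (Fin t → Fin n → ZMod 2)))).bind fun RW =>
      (F (Finset.univ.biUnion fun Q : {Q // Q ∈ S} =>
          {Fin.append (RW.1 Q) (RW.2 Q), Fin.append (Q.1 + RW.1 Q) (RW.2 Q)})).map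
        fun f Q j =>
          f ⟨Fin.append (RW.1 Q) (RW.2 Q),
              Finset.mem_biUnion.mpr ⟨Q, Finset.mem_univ _, Finset.mem_insert_self _ _⟩⟩
            (Fin.castAdd t j)
          + f ⟨Fin.append (Q.1 + RW.1 Q) (RW.2 Q),
              Finset.mem_biUnion.mpr ⟨Q, Finset.mem_univ _,
                Finset.mem_insert_of_mem (Finset.mem_singleton_self _)⟩⟩
            (Fin.castAdd t j)

/-
Let `A = [R;W]` and `C = [R';W']` be the masks used to answer `X` and `Y`, and `B = A + [X;0]`,
`D = C + [Y;0]` the masked queries. Over `𝔽₂` the claim `F(A) + F(B) = F(C) + F(D)` reads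
`F(A) + F(C) = F(B) + F(D)`. Both sides are instances of the linearity test, so at a cost of `2ε`
they become `F(A+C)` and `F(B+D)`, where `A + C` is uniform and `B + D = A + C + [X+Y;0]`. These two
queries agree on the `t` coordinates obtained by choosing, for each `j`, the `j`-th coordinate if
`X j = Y j` and the `(t+j)`-th otherwise. A permutation moves these coordinates to the first half,
and two consistency tests against a common query with a fresh second half cost another `2ε`.
-/

open Finset
open scoped BigOperators

section Prob

variable {α β : Type*}

lemma prob_eq_toMeasure_real (p : PMF α) (E : Set α) :
    prob p E = (@PMF.toMeasure α ⊤ p).real E := by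
  let _ : MeasurableSpace α := ⊤
  rw [prob, MeasureTheory.measureReal_def, p.toMeasure_apply_eq_toOuterMeasure]

lemma prob_le_one (p : PMF α) (E : Set α) : prob p E ≤ 1 := by
  let _ : MeasurableSpace α := ⊤
  rw [prob_eq_toMeasure_real]
  exact MeasureTheory.measureReal_le_one

lemma prob_univ (p : PMF α) : prob p Set.univ = 1 := by
  let _ : MeasurableSpace α := ⊤
  rw [prob_eq_toMeasure_real]
  exact MeasureTheory.probReal_univ

lemma prob_mono (p : PMF α) {E E' : Set α} (h : E ⊆ E') : prob p E ≤ prob p E' := by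
  let _ : MeasurableSpace α := ⊤
  rw [prob_eq_toMeasure_real, prob_eq_toMeasure_real]
  exact MeasureTheory.measureReal_mono h

lemma prob_add_prob_le_one_add_prob (p : PMF α) {E₁ E₂ E : Set α} (h : E₁ ∩ E₂ ⊆ E) :
    prob p E₁ + prob p E₂ ≤ 1 + prob p E := by
  have union_add_inter : prob p (E₁ ∪ E₂) + prob p (E₁ ∩ E₂) = prob p E₁ + prob p E₂ := by
    let _ : MeasurableSpace α := ⊤
    simp only [prob_eq_toMeasure_real]
    exact MeasureTheory.measureReal_union_add_inter MeasurableSpace.measurableSet_top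
  linarith [prob_le_one p (E₁ ∪ E₂), prob_mono p h]

lemma prob_map (p : PMF α) (f : α → β) (E : Set β) : prob (p.map f) E = prob p (f ⁻¹' E) := by
  rw [prob, prob, PMF.toOuterMeasure_map_apply]

lemma eq_of_prob_singleton_eq {p q : PMF α} (h : ∀ a, prob p {a} = prob q {a}) : p = q := by
  ext a
  rw [← ENNReal.toReal_eq_toReal_iff' (p.apply_ne_top a) (q.apply_ne_top a)]
  simpa only [prob, PMF.toOuterMeasure_apply_singleton] using h a

lemma prob_bind_uniformOfFintype [Fintype α] [Nonempty α] (f : α → PMF β) (E : Set β) :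
    prob ((PMF.uniformOfFintype α).bind f) E = 𝔼 a, prob (f a) E := by
  have ne_top (a : α) : PMF.uniformOfFintype α a * (f a).toOuterMeasure E ≠ ⊤ := by
    let _ : MeasurableSpace β := ⊤
    rw [← (f a).toMeasure_apply_eq_toOuterMeasure]
    exact ENNReal.mul_ne_top (PMF.apply_ne_top _ _) (MeasureTheory.measure_ne_top _ _)
  simp only [prob]
  rw [PMF.toOuterMeasure_bind_apply, tsum_fintype, ENNReal.toReal_sum fun a _ => ne_top a,
    Fintype.expect_eq_sum_div_card, sum_div]
  simp [div_eq_inv_mul]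

end Prob

section Expect

variable {M : Type*} [AddCommMonoid M] [Module ℚ≥0 M]

lemma expect_add_right {G : Type*} [AddGroup G] [Fintype G] (f : G → M) (c : G) :
    𝔼 x, f (x + c) = 𝔼 x, f x :=
  Fintype.expect_equiv (Equiv.addRight c) _ _ fun _ => rfl

lemma expect_expect_add {G : Type*} [AddGroup G] [Fintype G] (f : G → M) :
    𝔼 x, 𝔼 y, f (x + y) = 𝔼 x, f x := by
  have shift (x : G) : 𝔼 y, f (x + y) = 𝔼 y, f y :=
    Fintype.expect_equiv (Equiv.addLeft x) _ _ fun _ => rfl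
  simp only [shift, Fintype.expect_const]

lemma expect_prod {α β : Type*} [Fintype α] [Fintype β] (f : α × β → M) :
    𝔼 p, f p = 𝔼 a, 𝔼 b, f (a, b) := by
  rw [← univ_product_univ, expect_product]

lemma expect_append {β : Type*} [Fintype β] {m n : ℕ} (f : (Fin (m + n) → β) → M) :
    𝔼 u, f u = 𝔼 w, 𝔼 z, f (Fin.append w z) := by
  rw [← expect_prod fun p : (Fin m → β) × (Fin n → β) => f (Fin.append p.1 p.2)]
  exact (Fintype.expect_equiv (Fin.appendEquiv m n) _ _ fun _ => rfl).symm

variable {ι β : Type*} [Fintype ι] [DecidableEq ι] [Fintype β] [Nonempty β]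

lemma expect_pi_apply (f : β → M) (i : ι) : 𝔼 r : ι → β, f (r i) = 𝔼 b, f b :=
  calc 𝔼 r : ι → β, f (r i)
    _ = 𝔼 p : β × ({j // j ≠ i} → β), f p.1 :=
      Fintype.expect_equiv (Equiv.funSplitAt i β) _ _ fun _ => rfl
    _ = 𝔼 b, f b := by simp only [expect_prod, Fintype.expect_const]

lemma expect_pi_apply_apply (f : β → β → M) {i j : ι} (hij : i ≠ j) :
    𝔼 r : ι → β, f (r i) (r j) = 𝔼 a, 𝔼 b, f a b :=
  calc 𝔼 r : ι → β, f (r i) (r j)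
    _ = 𝔼 p : β × ({j // j ≠ i} → β), f p.1 (p.2 ⟨j, hij.symm⟩) :=
      Fintype.expect_equiv (Equiv.funSplitAt i β) _ _ fun _ => rfl
    _ = 𝔼 a, 𝔼 b, f a b := by simp only [expect_prod, expect_pi_apply]

end Expect

section Answers

variable {D A ι κ : Type*} [DecidableEq D] [Fintype ι] [Fintype κ] {k l : ℕ}
  {F : (S : Finset D) → PMF ({x // x ∈ S} → A)}

/-- The joint law of the answers of the family `F` to a tuple of queries `q`, which may contain
repetitions. Events about several answers then refer to positions in the tuple, and no membership
proofs are needed. -/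
noncomputable def answers (F : (S : Finset D) → PMF ({x // x ∈ S} → A)) (q : ι → D) :
    PMF (ι → A) :=
  (F (univ.image q)).map fun f i => f ⟨q i, mem_image_of_mem q (mem_univ i)⟩

lemma IsNonSignaling.mono (hns : IsNonSignaling l F) (hkl : k ≤ l) : IsNonSignaling k F :=
  fun S T hS hT => hns S T (hS.trans hkl) (hT.trans hkl)

lemma IsNonSignaling.map_restrictAssign (hns : IsNonSignaling k F) {S T : Finset D} (h : T ⊆ S)
    (hS : #S ≤ k) : (F S).map (restrictAssign h) = F T := by
  have map_eq_of_inter_eq (U : Finset D) (hU : U = T) (hUS : U ⊆ S) (hUT : U ⊆ T)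
      (heq : marginal (F S) hUS = marginal (F T) hUT) : (F S).map (restrictAssign h) = F T := by
    subst hU
    exact heq.trans (PMF.map_id _)
  exact map_eq_of_inter_eq _ (inter_eq_right.2 h) _ _ (hns S T hS ((card_le_card h).trans hS))

lemma IsNonSignaling.map_eval_eq_answers (hns : IsNonSignaling k F) {S : Finset D} (hS : #S ≤ k)
    (q : ι → D) (hq : ∀ i, q i ∈ S) : (F S).map (fun f i => f ⟨q i, hq i⟩) = answers F q := by
  rw [answers, ← hns.map_restrictAssign (image_subset_iff.2 fun i _ => hq i) hS, PMF.map_comp]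
  rfl

lemma IsNonSignaling.prob_answers_of_comp (hns : IsNonSignaling k F)
    (hι : Fintype.card ι ≤ k) {q : ι → D} {q' : κ → D} (e : κ → ι)
    (he : ∀ i, q (e i) = q' i) (E : Set (κ → A)) :
    prob (answers F q') E = prob (answers F q) {a | a ∘ e ∈ E} := by
  obtain rfl : q ∘ e = q' := funext he
  have hcard : #(univ.image q) ≤ k := card_image_le.trans hι
  rw [← hns.map_eval_eq_answers hcard (q ∘ e) fun i => mem_image_of_mem q (mem_univ (e i)),
    answers, prob_map, prob_map]
  rfl

end Answers

section PermFolded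

variable {m : ℕ} {D A : Type*} [DecidableEq D] {k l : ℕ}
  {F : (S : Finset (Fin m → D)) → PMF ({Q // Q ∈ S} → (Fin m → A))}

lemma IsPermFolded.mono (hfold : IsPermFolded l F) (hkl : k ≤ l) : IsPermFolded k F :=
  fun ℓ Q π b hℓ => hfold ℓ Q π b (hℓ.trans hkl)

lemma IsPermFolded.map_answers_permQ (hfold : IsPermFolded k F) {ℓ : ℕ} (hℓ : ℓ ≤ k)
    (Q : Fin ℓ → Fin m → D) (π : Fin ℓ → Equiv.Perm (Fin m)) :
    (answers F Q).map (fun a i => permQ (π i) (a i)) =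
      answers F fun i => permQ (π i) (Q i) := by
  refine eq_of_prob_singleton_eq fun b => ?_
  have permQ_eq_iff (i : Fin ℓ) (a : Fin m → A) :
      permQ (π i) a = b i ↔ a = permQ (π i).symm (b i) :=
    ((π i).symm.arrowCongr (Equiv.refl A)).eq_symm_apply.symm
  have permQ_permQ_symm (i : Fin ℓ) : permQ (π i) (permQ (π i).symm (b i)) = b i :=
    (permQ_eq_iff i _).2 rfl
  rw [answers, answers, prob_map, prob_map, prob_map]
  convert hfold ℓ Q π (fun i => permQ (π i).symm (b i)) hℓ using 2
  · ext f
    simp [funext_iff (g := b), permQ_eq_iff]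
  · ext f
    simp [funext_iff (g := b), permQ_permQ_symm]

end PermFolded

section AgreementProbabilities

variable {D ι A : Type*} [DecidableEq D]

/-- The probability that the answers to `x` and `y` agree on the coordinates in `J`. -/
noncomputable def agreeProb (F : (S : Finset D) → PMF ({x // x ∈ S} → (ι → A))) (J : Set ι)
    (x y : D) : ℝ :=
  prob (answers F ![x, y]) {a | ∀ i ∈ J, a 0 i = a 1 i}

/-- The probability that the answers to `x` and `y` add up to the answer to `z` on the coordinates
in `J`. -/
noncomputable def sumProb [Add A] (F : (S : Finset D) → PMF ({x // x ∈ S} → (ι → A))) (J : Set ι)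
    (x y z : D) : ℝ :=
  prob (answers F ![x, y, z]) {a | ∀ i ∈ J, a 0 i + a 1 i = a 2 i}

/-- The probability that the answers to `x` and `y` have the same sum as the answers to `x'` and
`y'` on the coordinates in `J`. -/
noncomputable def sumsAgreeProb [Add A] (F : (S : Finset D) → PMF ({x // x ∈ S} → (ι → A)))
    (J : Set ι) (x y x' y' : D) : ℝ :=
  prob (answers F ![x, y, x', y']) {a | ∀ i ∈ J, a 0 i + a 1 i = a 2 i + a 3 i}

variable {F : (S : Finset D) → PMF ({x // x ∈ S} → (ι → A))} {J : Set ι}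

lemma sumProb_anti [Add A] {J' : Set ι} (h : J ⊆ J') (x y z : D) :
    sumProb F J' x y z ≤ sumProb F J x y z :=
  prob_mono _ fun _ ha i hi => ha i (h hi)

lemma sumsAgreeProb_anti [Add A] {J' : Set ι} (h : J ⊆ J') (x y x' y' : D) :
    sumsAgreeProb F J' x y x' y' ≤ sumsAgreeProb F J x y x' y' :=
  prob_mono _ fun _ ha i hi => ha i (h hi)

lemma IsNonSignaling.agreeProb_add_agreeProb_le (hns : IsNonSignaling 3 F) (x y z : D) :
    agreeProb F J x z + agreeProb F J y z ≤ 1 + agreeProb F J x y := by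
  have marginal_xz : agreeProb F J x z = prob (answers F ![x, y, z]) {a | ∀ i ∈ J, a 0 i = a 2 i} :=
    hns.prob_answers_of_comp (by simp) ![0, 2] (by simp [Fin.forall_fin_succ]) _
  have marginal_yz : agreeProb F J y z = prob (answers F ![x, y, z]) {a | ∀ i ∈ J, a 1 i = a 2 i} :=
    hns.prob_answers_of_comp (by simp) ![1, 2] (by simp [Fin.forall_fin_succ]) _
  have marginal_xy : agreeProb F J x y = prob (answers F ![x, y, z]) {a | ∀ i ∈ J, a 0 i = a 1 i} :=
    hns.prob_answers_of_comp (by simp) ![0, 1] (by simp [Fin.forall_fin_succ]) _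
  rw [marginal_xz, marginal_yz, marginal_xy]
  exact prob_add_prob_le_one_add_prob _ fun a ⟨hxz, hyz⟩ i hi => (hxz i hi).trans (hyz i hi).symm

lemma IsNonSignaling.sumProb_add_agreeProb_le [Add A] (hns : IsNonSignaling 4 F) (x y z u : D) :
    sumProb F J x y z + agreeProb F J u z ≤ 1 + sumProb F J x y u := by
  have marginal_xyz : sumProb F J x y z =
      prob (answers F ![x, y, z, u]) {a | ∀ i ∈ J, a 0 i + a 1 i = a 2 i} :=
    hns.prob_answers_of_comp (by simp) ![0, 1, 2] (by simp [Fin.forall_fin_succ]) _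
  have marginal_uz : agreeProb F J u z =
      prob (answers F ![x, y, z, u]) {a | ∀ i ∈ J, a 3 i = a 2 i} :=
    hns.prob_answers_of_comp (by simp) ![3, 2] (by simp [Fin.forall_fin_succ]) _
  have marginal_xyu : sumProb F J x y u =
      prob (answers F ![x, y, z, u]) {a | ∀ i ∈ J, a 0 i + a 1 i = a 3 i} :=
    hns.prob_answers_of_comp (by simp) ![0, 1, 3] (by simp [Fin.forall_fin_succ]) _
  rw [marginal_xyz, marginal_uz, marginal_xyu]
  exact prob_add_prob_le_one_add_prob _ fun a ⟨hxyz, huz⟩ i hi =>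
    (hxyz i hi).trans (huz i hi).symm

lemma IsNonSignaling.sumProb_add_sumProb_le [Add A] (hns : IsNonSignaling 5 F)
    (x y x' y' z : D) :
    sumProb F J x y z + sumProb F J x' y' z ≤ 1 + sumsAgreeProb F J x y x' y' := by
  have marginal_xyz : sumProb F J x y z =
      prob (answers F ![x, y, x', y', z]) {a | ∀ i ∈ J, a 0 i + a 1 i = a 4 i} :=
    hns.prob_answers_of_comp (by simp) ![0, 1, 4] (by simp [Fin.forall_fin_succ]) _
  have marginal_xyz' : sumProb F J x' y' z =
      prob (answers F ![x, y, x', y', z]) {a | ∀ i ∈ J, a 2 i + a 3 i = a 4 i} :=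
    hns.prob_answers_of_comp (by simp) ![2, 3, 4] (by simp [Fin.forall_fin_succ]) _
  have marginal_xyxy : sumsAgreeProb F J x y x' y' =
      prob (answers F ![x, y, x', y', z]) {a | ∀ i ∈ J, a 0 i + a 1 i = a 2 i + a 3 i} :=
    hns.prob_answers_of_comp (by simp) ![0, 1, 2, 3] (by simp [Fin.forall_fin_succ]) _
  rw [marginal_xyz, marginal_xyz', marginal_xyxy]
  exact prob_add_prob_le_one_add_prob _ fun a ⟨hxyz, hxyz'⟩ i hi =>
    (hxyz i hi).trans (hxyz' i hi).symm

lemma IsNonSignaling.sumProb_add_sumProb_add_agreeProb_le [Add A] (hns : IsNonSignaling 5 F)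
    (x y z x' y' z' : D) :
    sumProb F J x y z + sumProb F J x' y' z' + agreeProb F J z z' ≤
      2 + sumsAgreeProb F J x y x' y' := by
  linarith [(hns.mono (by simp)).sumProb_add_agreeProb_le (J := J) x' y' z' z,
    hns.sumProb_add_sumProb_le (J := J) x y x' y' z]

lemma IsNonSignaling.prob_add_eq_add_eq_sumsAgreeProb [Ring A] [CharP A 2] {k : ℕ}
    (hns : IsNonSignaling k F) (J : Set ι) {S : Finset D} (hS : #S ≤ k) {x y x' y' : D}
    (hx : x ∈ S) (hy : y ∈ S) (hx' : x' ∈ S) (hy' : y' ∈ S) :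
    prob (F S) {f | ∀ i ∈ J, f ⟨x, hx⟩ i + f ⟨x', hx'⟩ i = f ⟨y, hy⟩ i + f ⟨y', hy'⟩ i} =
      sumsAgreeProb F J x y x' y' := by
  have swap (a b c d : A) : a + c = b + d ↔ a + b = c + d := by
    rw [← CharTwo.add_eq_zero, ← CharTwo.add_eq_zero (a := a + b), add_add_add_comm]
  rw [sumsAgreeProb, ← hns.map_eval_eq_answers hS ![x, y, x', y']
    (by simp [Fin.forall_fin_succ, hx, hy, hx', hy']), prob_map]
  congr 1
  ext f
  exact forall₂_congr fun i _ => swap _ _ _ _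

end AgreementProbabilities

lemma IsPermFolded.agreeProb_permQ {m : ℕ} {D A : Type*} [DecidableEq D]
    {F : (S : Finset (Fin m → D)) → PMF ({Q // Q ∈ S} → (Fin m → A))}
    (hfold : IsPermFolded 2 F) (π : Equiv.Perm (Fin m)) (J : Set (Fin m)) (Q Q' : Fin m → D) :
    agreeProb F J (permQ π Q) (permQ π Q') = agreeProb F (π '' J) Q Q' := by
  have map_permQ : (answers F ![Q, Q']).map (fun a i => permQ π (a i)) =
      answers F ![permQ π Q, permQ π Q'] := by
    rw [hfold.map_answers_permQ le_rfl]
    congr 1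
    simp [funext_iff, Fin.forall_fin_two]
  rw [agreeProb, agreeProb, ← map_permQ, prob_map]
  congr 1
  ext a
  simp only [Set.mem_preimage, Set.mem_ofPred_eq, Set.forall_mem_image, permQ]

section Append

lemma append_add_append {β : Type*} [Add β] {l m : ℕ} (a b : Fin l → β) (c d : Fin m → β) :
    Fin.append a c + Fin.append b d = Fin.append (a + b) (c + d) := by
  ext i
  cases i using Fin.addCases <;> simp only [Pi.add_apply, Fin.append_left, Fin.append_right]

lemma exists_injective_append_zero_comp_eq_zero {β : Type*} [Zero β] {t : ℕ} (d : Fin t → β) :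
    ∃ e : Fin t → Fin (t + t), e.Injective ∧ (Fin.castAdd t '' {j | d j = 0} ⊆ Set.range e) ∧
      ∀ j, Fin.append d (0 : Fin t → β) (e j) = 0 := by
  classical
  refine ⟨fun j => if d j = 0 then Fin.castAdd t j else Fin.natAdd t j, ?_, ?_, ?_⟩
  · intro i j hij
    simp only [Fin.ext_iff] at hij
    split_ifs at hij <;> simp only [Fin.val_castAdd, Fin.val_natAdd] at hij <;> omega
  · rintro _ ⟨j, hj, rfl⟩
    exact ⟨j, if_pos hj⟩
  · intro j
    by_cases hj : d j = 0
    · simp only [hj, if_true, Fin.append_left]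
    · simp only [hj, if_false, Fin.append_right, Pi.zero_apply]

end Append

section Tests

variable {n t : ℕ}

lemma linTestAccept_le_one (F : NSFam n t) : linTestAccept F ≤ 1 := prob_le_one _ _

lemma consTestAccept_le_one (F : NSFam n (t + t)) : consTestAccept F ≤ 1 := prob_le_one _ _

lemma linTestAccept_eq_expect_sumProb {F : NSFam n t} (hns : IsNonSignaling 3 F) :
    linTestAccept F = 𝔼 x, 𝔼 y, sumProb F Set.univ x y (x + y) := by
  rw [linTestAccept, prob_bind_uniformOfFintype, expect_prod]
  refine expect_congr rfl fun x _ => expect_congr rfl fun y _ => ?_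
  rw [sumProb, ← hns.map_eval_eq_answers (S := {x, y, x + y}) card_le_three ![x, y, x + y]
    (by simp [Fin.forall_fin_succ]), prob_map, prob_map]
  congr 1
  ext f
  simp [funext_iff]

lemma linTestAccept_le_expect_sumProb_shift {F : NSFam n t} (hns : IsNonSignaling 3 F)
    (J : Set (Fin t)) (a b : Fin t → Fin n → ZMod 2) :
    linTestAccept F ≤ 𝔼 x, 𝔼 y, sumProb F J (x + a) (y + b) (x + a + (y + b)) :=
  calc linTestAccept F
    _ ≤ 𝔼 x, 𝔼 y, sumProb F J x y (x + y) := by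
      rw [linTestAccept_eq_expect_sumProb hns]
      gcongr
      exact sumProb_anti (Set.subset_univ J) _ _ _
    _ = 𝔼 x, 𝔼 y, sumProb F J (x + a) (y + b) (x + a + (y + b)) := by
      rw [← expect_add_right _ a]
      exact expect_congr rfl fun x _ =>
        (expect_add_right (fun y => sumProb F J (x + a) y (x + a + y)) b).symm

lemma two_mul_linTestAccept_add_expect_agreeProb_le {F : NSFam n t} (hns : IsNonSignaling 5 F)
    (J : Set (Fin t)) (a b : Fin t → Fin n → ZMod 2) :
    2 * linTestAccept F + 𝔼 u, agreeProb F J u (u + (a + b)) ≤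
      2 + 𝔼 x, 𝔼 y, sumsAgreeProb F J x y (x + a) (y + b) := by
  have lin_le := linTestAccept_le_expect_sumProb_shift (hns.mono (by simp)) J 0 0
  have lin_le_shift := linTestAccept_le_expect_sumProb_shift (hns.mono (by simp)) J a b
  simp only [add_zero] at lin_le
  calc 2 * linTestAccept F + 𝔼 u, agreeProb F J u (u + (a + b))
    _ ≤ 𝔼 x, 𝔼 y, (sumProb F J x y (x + y) + sumProb F J (x + a) (y + b) (x + a + (y + b)) +
          agreeProb F J (x + y) (x + a + (y + b))) := by
      simp only [expect_add_distrib, add_add_add_comm _ a,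
        expect_expect_add fun u => agreeProb F J u (u + (a + b))] at lin_le_shift ⊢
      linarith
    _ ≤ 𝔼 x, 𝔼 y, (2 + sumsAgreeProb F J x y (x + a) (y + b)) := by
      gcongr 𝔼 x, 𝔼 y, ?_ with x _ y _
      exact hns.sumProb_add_sumProb_add_agreeProb_le _ _ _ _ _ _
    _ = 2 + 𝔼 x, 𝔼 y, sumsAgreeProb F J x y (x + a) (y + b) := by
      simp only [expect_add_distrib, Fintype.expect_const]

variable {F : NSFam n (t + t)}

lemma consTestAccept_eq_expect_agreeProb (hns : IsNonSignaling 2 F) :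
    consTestAccept F = 𝔼 w, 𝔼 z, 𝔼 v,
      agreeProb F (Set.range (Fin.castAdd t)) (Fin.append w z) (Fin.append w v) := by
  rw [consTestAccept, prob_bind_uniformOfFintype, expect_prod]
  simp only [expect_prod]
  refine expect_congr rfl fun w _ => expect_congr rfl fun z _ => expect_congr rfl fun v _ => ?_
  rw [agreeProb, ← hns.map_eval_eq_answers (S := {Fin.append w z, Fin.append w v}) card_le_two
    ![Fin.append w z, Fin.append w v] (by simp [Fin.forall_fin_succ]), prob_map, prob_map]
  congr 1
  ext f
  simp

lemma two_mul_consTestAccept_le_expect_append (hns : IsNonSignaling 3 F)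
    (c : Fin t → Fin n → ZMod 2) :
    2 * consTestAccept F ≤ 1 + 𝔼 w, 𝔼 z,
      agreeProb F (Set.range (Fin.castAdd t)) (Fin.append w z) (Fin.append w (z + c)) := by
  let agree (w z v : Fin t → Fin n → ZMod 2) : ℝ :=
    agreeProb F (Set.range (Fin.castAdd t)) (Fin.append w z) (Fin.append w v)
  have cons_eq : consTestAccept F = 𝔼 w, 𝔼 z, 𝔼 v, agree w z v :=
    consTestAccept_eq_expect_agreeProb (hns.mono (by simp))
  have cons_eq_shift : consTestAccept F = 𝔼 w, 𝔼 z, 𝔼 v, agree w (z + c) v := by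
    rw [cons_eq]
    exact expect_congr rfl fun w _ => (expect_add_right (fun z => 𝔼 v, agree w z v) c).symm
  calc 2 * consTestAccept F
    _ = 𝔼 w, 𝔼 z, 𝔼 v, (agree w z v + agree w (z + c) v) := by
      simp only [expect_add_distrib, ← cons_eq, ← cons_eq_shift, two_mul]
    _ ≤ 𝔼 w, 𝔼 z, 𝔼 _v : Fin t → Fin n → ZMod 2, (1 + agree w z (z + c)) := by
      gcongr 𝔼 w, 𝔼 z, 𝔼 v, ?_ with w _ z _ v _
      exact hns.agreeProb_add_agreeProb_le _ _ _
    _ = 1 + 𝔼 w, 𝔼 z, agree w z (z + c) := by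
      simp only [expect_add_distrib, Fintype.expect_const]

lemma two_mul_consTestAccept_le_expect_range (hns : IsNonSignaling 3 F)
    (hfold : IsPermFolded 2 F) {e : Fin t → Fin (t + t)} (he : e.Injective)
    (c : Fin (t + t) → Fin n → ZMod 2) (hc : ∀ j, c (e j) = 0) :
    2 * consTestAccept F ≤ 1 + 𝔼 u, agreeProb F (Set.range e) u (u + c) := by
  obtain ⟨π, hπ⟩ := Equiv.Perm.exists_extending_pair (Fin.castAdd t) e
    (Fin.castAdd_injective t t) he
  let c₂ : Fin t → Fin n → ZMod 2 := fun j => c (π (Fin.natAdd t j))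
  have permQ_c : permQ π c = Fin.append 0 c₂ := by
    funext i
    cases i using Fin.addCases with
    | left j => rw [Fin.append_left, permQ, hπ, hc, Pi.zero_apply]
    | right j => rw [Fin.append_right, permQ]
  have range_e : π '' Set.range (Fin.castAdd t) = Set.range e := by
    rw [← Set.range_comp]
    exact congrArg _ (funext hπ)
  have unfold_perm : 𝔼 u, agreeProb F (Set.range e) u (u + c) =
      𝔼 u, agreeProb F (Set.range (Fin.castAdd t)) u (u + Fin.append 0 c₂) := by
    refine Fintype.expect_equiv (π.symm.arrowCongr (Equiv.refl _)) _ _ fun u => ?_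
    rw [← range_e, ← hfold.agreeProb_permQ, ← permQ_c]
    rfl
  rw [unfold_perm, expect_append]
  simp only [append_add_append, add_zero]
  exact two_mul_consTestAccept_le_expect_append hns c₂

end Tests

section SelfCorrect

lemma card_biUnion_pair_le {α β : Type*} [DecidableEq β] {S : Finset α} {f g : S → β} :
    #(univ.biUnion fun Q : S => {f Q, g Q}) ≤ 2 * #S :=
  calc #(univ.biUnion fun Q : S => {f Q, g Q})
    _ ≤ #(univ : Finset S) * 2 := card_biUnion_le_card_mul _ _ _ fun _ _ => card_le_two
    _ = 2 * #S := by rw [card_univ, Fintype.card_coe, mul_comm]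

variable {n t : ℕ} {F : NSFam n (t + t)}

lemma prob_selfCorrect_eq_expect_masks (hns : IsNonSignaling 4 F)
    (X Y : Fin t → Fin n → ZMod 2) :
    prob (selfCorrect F {X, Y})
        {f | ∀ j : Fin t, X j = Y j → f ⟨X, by simp⟩ j = f ⟨Y, by simp⟩ j} =
      𝔼 RW : ({Q // Q ∈ ({X, Y} : Finset _)} → Fin t → Fin n → ZMod 2) ×
          ({Q // Q ∈ ({X, Y} : Finset _)} → Fin t → Fin n → ZMod 2),
        sumsAgreeProb F (Fin.castAdd t '' {j | X j = Y j})
          (Fin.append (RW.1 ⟨X, by simp⟩) (RW.2 ⟨X, by simp⟩))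
          (Fin.append (RW.1 ⟨Y, by simp⟩) (RW.2 ⟨Y, by simp⟩))
          (Fin.append (X + RW.1 ⟨X, by simp⟩) (RW.2 ⟨X, by simp⟩))
          (Fin.append (Y + RW.1 ⟨Y, by simp⟩) (RW.2 ⟨Y, by simp⟩)) := by
  rw [selfCorrect, prob_bind_uniformOfFintype]
  refine expect_congr rfl fun ⟨R, W⟩ _ => ?_
  let queries := univ.biUnion fun Q : {Q // Q ∈ ({X, Y} : Finset _)} =>
    {Fin.append (R Q) (W Q), Fin.append (Q.1 + R Q) (W Q)}
  have card_queries_le : #queries ≤ 4 :=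
    card_biUnion_pair_le.trans (Nat.mul_le_mul_left 2 card_le_two)
  have mask_mem Q : Fin.append (R Q) (W Q) ∈ queries :=
    mem_biUnion.2 ⟨Q, mem_univ Q, by simp⟩
  have masked_mem Q : Fin.append (Q.1 + R Q) (W Q) ∈ queries :=
    mem_biUnion.2 ⟨Q, mem_univ Q, by simp⟩
  rw [prob_map, ← hns.prob_add_eq_add_eq_sumsAgreeProb _ card_queries_le
    (mask_mem ⟨X, by simp⟩) (mask_mem ⟨Y, by simp⟩)
    (masked_mem ⟨X, by simp⟩) (masked_mem ⟨Y, by simp⟩)]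
  simp only [Set.forall_mem_image]
  rfl

lemma prob_selfCorrect_eq_expect (hns : IsNonSignaling 4 F) {X Y : Fin t → Fin n → ZMod 2}
    (hXY : X ≠ Y) :
    prob (selfCorrect F {X, Y})
        {f | ∀ j : Fin t, X j = Y j → f ⟨X, by simp⟩ j = f ⟨Y, by simp⟩ j} =
      𝔼 x, 𝔼 y, sumsAgreeProb F (Fin.castAdd t '' {j | X j = Y j})
        x y (x + Fin.append X 0) (y + Fin.append Y 0) := by
  let ι := {Q // Q ∈ ({X, Y} : Finset (Fin t → Fin n → ZMod 2))}
  let iX : ι := ⟨X, by simp⟩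
  let iY : ι := ⟨Y, by simp⟩
  let agree (x y : Fin (t + t) → Fin n → ZMod 2) : ℝ :=
    sumsAgreeProb F (Fin.castAdd t '' {j | X j = Y j})
      x y (x + Fin.append X 0) (y + Fin.append Y 0)
  let appendCurry : (ι → Fin t → Fin n → ZMod 2) × (ι → Fin t → Fin n → ZMod 2) ≃
      (ι → Fin (t + t) → Fin n → ZMod 2) :=
    (Equiv.arrowProdEquivProdArrow ι _ _).symm.trans
      ((Equiv.refl ι).arrowCongr (Fin.appendEquiv t t))
  calc prob (selfCorrect F {X, Y}) {f | ∀ j : Fin t, X j = Y j → f iX j = f iY j}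
    _ = 𝔼 RW : (ι → Fin t → Fin n → ZMod 2) × (ι → Fin t → Fin n → ZMod 2),
          agree (Fin.append (RW.1 iX) (RW.2 iX)) (Fin.append (RW.1 iY) (RW.2 iY)) := by
      simp only [agree, append_add_append, add_zero, add_comm _ X, add_comm _ Y]
      exact prob_selfCorrect_eq_expect_masks hns X Y
    _ = 𝔼 r : ι → Fin (t + t) → Fin n → ZMod 2, agree (r iX) (r iY) :=
      Fintype.expect_equiv appendCurry _ _ fun _ => rfl
    _ = 𝔼 x, 𝔼 y, agree x y :=
      expect_pi_apply_apply agree fun h => hXY (congrArg Subtype.val h)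

theorem selfCorrect_consistent_general (hns : IsNonSignaling 5 F) (hfold : IsPermFolded 2 F)
    (X Y : Fin t → Fin n → ZMod 2) :
    2 * linTestAccept F + 2 * consTestAccept F - 3 ≤
      prob (selfCorrect F {X, Y})
        {f | ∀ j : Fin t, X j = Y j → f ⟨X, by simp⟩ j = f ⟨Y, by simp⟩ j} := by
  rcases eq_or_ne X Y with rfl | hXY
  · simp only [implies_true, Set.ofPred_true, prob_univ]
    linarith [linTestAccept_le_one F, consTestAccept_le_one F]
  obtain ⟨e, he, subset_range, append_eq_zero⟩ :=
    exists_injective_append_zero_comp_eq_zero (X + Y)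
  have append_XY : Fin.append X (0 : Fin t → Fin n → ZMod 2) + Fin.append Y 0 =
      Fin.append (X + Y) 0 := by
    rw [append_add_append, add_zero]
  have cons_le := two_mul_consTestAccept_le_expect_range (hns.mono (by simp)) hfold he
    _ append_eq_zero
  have lin_add_agree_le := two_mul_linTestAccept_add_expect_agreeProb_le hns (Set.range e)
    (Fin.append X 0) (Fin.append Y 0)
  have range_le : 𝔼 x, 𝔼 y, sumsAgreeProb F (Set.range e) x y
        (x + Fin.append X 0) (y + Fin.append Y 0) ≤
      𝔼 x, 𝔼 y, sumsAgreeProb F (Fin.castAdd t '' {j | X j = Y j}) x y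
        (x + Fin.append X 0) (y + Fin.append Y 0) := by
    gcongr 𝔼 x, 𝔼 y, ?_ with x _ y _
    refine sumsAgreeProb_anti ?_ _ _ _ _
    simpa only [Pi.add_apply, add_eq_zero_iff_eq_neg, ZModModule.neg_eq_self] using subset_range
  rw [append_XY] at lin_add_agree_le
  rw [prob_selfCorrect_eq_expect (hns.mono (by simp)) hXY]
  linarith

end SelfCorrect

/-- if a permutation-folded `2t`-repeated `k`-non-signaling function
(`k ≥ 7`) passes both the linearity and consistency tests with probability at least
`1-ε`, then its self-correction is `(1-8ε)`-consistent: for any queries `X, Y`, with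
probability at least `1-8ε` the answers agree on all coordinates where `X` and `Y`
agree. -/
theorem selfCorrect_consistent {n t k : ℕ} (ε : ℝ) (F : NSFam n (t + t))
    (hns : IsNonSignaling k F) (hk : 7 ≤ k)
    (hfold : IsPermFolded k F)
    (hlin : linTestAccept F ≥ 1 - ε)
    (hcons : consTestAccept F ≥ 1 - ε) :
    ∀ X Y : Fin t → Fin n → ZMod 2,
      prob (selfCorrect F {X, Y})
        {f | ∀ j : Fin t, X j = Y j → f ⟨X, by simp⟩ j = f ⟨Y, by simp⟩ j}
        ≥ 1 - 8 * ε := by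
  intro X Y
  linarith [linTestAccept_le_one F,
    selfCorrect_consistent_general (hns.mono (by omega)) (hfold.mono (by omega)) X Y]
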